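/- arXiv:2410.18965 — 2 statements merged into one kernel-verified Lean document; each statement's English description precedes it below -/
import Mathlib

section
/- Suppose r < r_A (under-parametrization), rank(X_0) = r, and 0 < η ≤ 1. Then for every t ≥ 0 the ScaledGD iterate satisfies X_t = Q Φ_t for some Φ_t ∈ R^{r_A×r} of rank r; equivalently, (I_m − QQᵀ) X_t = 0 for all t, i.e., Nyström initialization eliminates the residual space along the entire trajectory. -/
open Matrix BigOperators

/-!
If `A = QSQᴴ` and `QᴴQ = 1`, then a ScaledGD step on `A` from `QΦ` is `Q` times a ScaledGD step on
`S` from `Φ`, so the trajectory never leaves the range of `Q`. Full column rank survives because,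
with `G = ΦᴴΦ` the Gram matrix, the new iterate `Φ⁺` satisfies `ΦᴴΦ⁺G = (1 - η)GᴴG + ηΦᴴSΦ`: for
`0 < η ≤ 1` this is a positive semidefinite matrix plus a positive definite one, hence invertible,
and `Φ⁺` has trivial kernel.
-/

theorem rank_eq_card_iff_mulVec_injective {m n K : Type*} [Fintype n] [Field K]
    {M : Matrix m n K} : M.rank = Fintype.card n ↔ Function.Injective M.mulVec := by
  rw [mulVec_injective_iff, linearIndependent_iff_card_eq_finrank_span, rank_eq_finrank_span_cols,
    eq_comm, Set.finrank]

section ScaledGD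

variable {m k n : Type*} [Fintype m] [Fintype k] [Fintype n] [DecidableEq n]

section CommRing

variable {R : Type*} [CommRing R] [StarRing R]

/-- One step of scaled gradient descent for the factorization `A ≈ XXᴴ`, from `X` with step size
`η`: the gradient `(XXᴴ - A)X` is preconditioned by the inverse Gram matrix `(XᴴX)⁻¹`, which is the
junk value `0` when `XᴴX` is not invertible. -/
noncomputable def scaledGDStep (A : Matrix m m R) (η : R) (X : Matrix m n R) : Matrix m n R :=
  X - η • ((X * Xᴴ - A) * X * (Xᴴ * X)⁻¹)

theorem scaledGDStep_mul_of_conjTranspose_mul_self_eq_one [DecidableEq k] {Q : Matrix m k R}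
    (hQ : Qᴴ * Q = 1) (S : Matrix k k R) (η : R) (Φ : Matrix k n R) :
    scaledGDStep (Q * S * Qᴴ) η (Q * Φ) = Q * scaledGDStep S η Φ := by
  have cancel (B : Matrix k n R) : Qᴴ * (Q * B) = B := by
    rw [← Matrix.mul_assoc, hQ, Matrix.one_mul]
  simp only [scaledGDStep, conjTranspose_mul, Matrix.mul_assoc, Matrix.sub_mul, cancel,
    Matrix.mul_sub, Matrix.mul_smul]

theorem conjTranspose_mul_scaledGDStep_mul_gram {Φ : Matrix k n R} (hΦ : IsUnit (Φᴴ * Φ))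
    (S : Matrix k k R) (η : R) :
    Φᴴ * scaledGDStep S η Φ * (Φᴴ * Φ) =
      (1 - η) • ((Φᴴ * Φ)ᴴ * (Φᴴ * Φ)) + η • (Φᴴ * S * Φ) := by
  have hG : (Φᴴ * Φ)⁻¹ * (Φᴴ * Φ) = 1 := nonsing_inv_mul _ ((isUnit_iff_isUnit_det _).1 hΦ)
  calc Φᴴ * scaledGDStep S η Φ * (Φᴴ * Φ)
      = Φᴴ * Φ * (Φᴴ * Φ) - η • (Φᴴ * ((Φ * Φᴴ - S) * Φ) * ((Φᴴ * Φ)⁻¹ * (Φᴴ * Φ))) := by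
        simp only [scaledGDStep, Matrix.mul_sub, Matrix.sub_mul, Matrix.mul_smul, Matrix.smul_mul,
          Matrix.mul_assoc]
    _ = Φᴴ * Φ * (Φᴴ * Φ) - η • (Φᴴ * Φ * (Φᴴ * Φ) - Φᴴ * S * Φ) := by
        rw [hG]
        simp only [Matrix.mul_one, Matrix.sub_mul, Matrix.mul_sub, Matrix.mul_assoc]
    _ = (1 - η) • ((Φᴴ * Φ)ᴴ * (Φᴴ * Φ)) + η • (Φᴴ * S * Φ) := by
        rw [conjTranspose_mul, conjTranspose_conjTranspose]
        module

end CommRing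

section StarOrderedField

variable {K : Type*} [Field K] [PartialOrder K] [StarRing K] [StarOrderedRing K]

theorem mulVec_injective_scaledGDStep {S : Matrix k k K} (hS : S.PosDef) {η : K} (hη₀ : 0 < η)
    (hη₁ : η ≤ 1) {Φ : Matrix k n K} (hΦ : Function.Injective Φ.mulVec) :
    Function.Injective (scaledGDStep S η Φ).mulVec := by
  have hG : IsUnit (Φᴴ * Φ) := (PosDef.conjTranspose_mul_self Φ hΦ).isUnit
  have hpos : (Φᴴ * scaledGDStep S η Φ * (Φᴴ * Φ)).PosDef := by
    rw [conjTranspose_mul_scaledGDStep_mul_gram hG]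
    exact .posSemidef_add ((posSemidef_conjTranspose_mul_self _).smul (sub_nonneg.2 hη₁))
      ((hS.conjTranspose_mul_mul_same hΦ).smul hη₀)
  have hunit : IsUnit (Φᴴ * scaledGDStep S η Φ) := hG.mul_right_iff.1 hpos.isUnit
  refine .of_comp (f := Φᴴ.mulVec) ?_
  simpa only [Function.comp_def, mulVec_mulVec] using mulVec_injective_of_isUnit hunit

theorem stmt_5_general [DecidableEq m] [DecidableEq k] {A : Matrix m m K} {Q : Matrix m k K}
    {S : Matrix k k K} (hQ : Qᴴ * Q = 1) (hS : S.PosDef) (hA : A = Q * S * Qᴴ) {η : K}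
    (hη₀ : 0 < η) (hη₁ : η ≤ 1) {Ω : Matrix m n K} {X : ℕ → Matrix m n K} (hX₀ : X 0 = A * Ω)
    (hrank : (X 0).rank = Fintype.card n) (hX : ∀ t, X (t + 1) = scaledGDStep A η (X t)) :
    (∀ t, ∃ Φ : Matrix k n K, Φ.rank = Fintype.card n ∧ X t = Q * Φ) ∧
      ∀ t, (1 - Q * Qᴴ) * X t = 0 := by
  have hfactor (t : ℕ) : ∃ Φ : Matrix k n K, Φ.rank = Fintype.card n ∧ X t = Q * Φ := by
    simp only [rank_eq_card_iff_mulVec_injective] at hrank ⊢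
    induction t with
    | zero =>
      have hX₀Q : X 0 = Q * (S * Qᴴ * Ω) := by simp only [hX₀, hA, Matrix.mul_assoc]
      refine ⟨S * Qᴴ * Ω, .of_comp (f := Q.mulVec) ?_, hX₀Q⟩
      simpa only [hX₀Q, Function.comp_def, mulVec_mulVec] using hrank
    | succ t ih =>
      obtain ⟨Φ, hΦ, hXt⟩ := ih
      refine ⟨scaledGDStep S η Φ, mulVec_injective_scaledGDStep hS hη₀ hη₁ hΦ, ?_⟩
      rw [hX, hXt, hA, scaledGDStep_mul_of_conjTranspose_mul_self_eq_one hQ]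
  refine ⟨hfactor, fun t ↦ ?_⟩
  obtain ⟨Φ, -, hXt⟩ := hfactor t
  have hresidual : (1 - Q * Qᴴ) * Q = 0 := by
    rw [Matrix.sub_mul, Matrix.one_mul, Matrix.mul_assoc, hQ, Matrix.mul_one, sub_self]
  rw [hXt, ← Matrix.mul_assoc, hresidual, Matrix.zero_mul]

end StarOrderedField

end ScaledGD

/-- Residual-space elimination for ScaledGD with Nyström initialization in the symmetric
under-parametrized setting (`r < r_A`): every iterate satisfies `X_t = QΦ_t` for some
`Φ_t ∈ ℝ^{r_A×r}` of rank `r`; equivalently `(I − QQᵀ)X_t = 0` for all `t`. -/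
theorem stmt_5
    (m rA r : ℕ) (hrrA : r < rA)
    (A : Matrix (Fin m) (Fin m) ℝ)
    (Q : Matrix (Fin m) (Fin rA) ℝ) (d : Fin rA → ℝ)
    (hQ : Qᵀ * Q = 1)
    (hd : ∀ i, 0 < d i)
    (hdmono : ∀ i j : Fin rA, i ≤ j → d j ≤ d i)
    (hA : A = Q * Matrix.diagonal d * Qᵀ)
    (η : ℝ) (hη0 : 0 < η) (hη1 : η ≤ 1)
    (Ω : Matrix (Fin m) (Fin r) ℝ)
    (X : ℕ → Matrix (Fin m) (Fin r) ℝ)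
    (hX0 : X 0 = A * Ω)
    (hrank : (X 0).rank = r)
    (hrec : ∀ t : ℕ,
      X (t + 1) = X t - η • ((X t * (X t)ᵀ - A) * X t * ((X t)ᵀ * X t)⁻¹)) :
    (∀ t : ℕ, ∃ Φ : Matrix (Fin rA) (Fin r) ℝ, Φ.rank = r ∧ X t = Q * Φ) ∧
    (∀ t : ℕ, (1 - Q * Qᵀ) * X t = 0) := by
  simpa only [Fintype.card_fin, conjTranspose_eq_transpose_of_trivial] using stmt_5_general hQ
    (posDef_diagonal_iff.2 hd) hA hη0 hη1 hX0 (hrank.trans (Fintype.card_fin r).symm) hrec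
end

section
/- Let A ∈ R^{m×n} have rank r_A, let r < r_A, and suppose (X*, Y*) ∈ R^{m×r} × R^{n×r} is a global minimizer of (X, Y) ↦ ‖XYᵀ − A‖_F². Then (X*, Y*) is generalized weakly optimal: (Y*)ᵀ A† X* = I_r, where A† = V Σ⁻¹ Uᵀ is the Moore–Penrose pseudoinverse of A, computed from the compact SVD A = UΣVᵀ. -/
open Matrix BigOperators

/-- The Frobenius norm of a real matrix. -/
noncomputable def frobNorm {m n : ℕ} (M : Matrix (Fin m) (Fin n) ℝ) : ℝ :=
  Real.sqrt (∑ i, ∑ j, (M i j) ^ 2)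

/-! The products `X' * Yᴴ` with `Y` fixed form a linear space, so at a global minimizer the residual
`R = X * Yᴴ - A` is orthogonal to it, which gives the normal equations `R * Y = 0` and `Xᴴ * R = 0`.
If `Y` did not have full column rank, the unused direction could absorb any rank-one perturbation of
`X * Yᴴ`; then `R` would be orthogonal to all rank-one matrices, so `A = X * Yᴴ` would have rank
less than `r`. Hence the Gram matrices `Xᴴ * X` and `Yᴴ * Y` are invertible, and they can be
cancelled from `(Xᴴ * X) * (Yᴴ * G * X) * (Yᴴ * Y) = Xᴴ * (A * G * A) * Y = (Xᴴ * X) * (Yᴴ * Y)`,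
for every `G` with `A * G * A = A`. -/

section Rank

variable {m n p : Type*} [Fintype m] [Fintype n] [Fintype p]

lemma linearIndependent_row_iff_card_le_rank {K : Type*} [Field K] {M : Matrix m n K} :
    LinearIndependent K M.row ↔ Fintype.card m ≤ M.rank := by
  rw [linearIndependent_iff_card_le_finrank_span, Matrix.rank_eq_finrank_span_row, Set.finrank]

lemma exists_vecMul_eq_zero_of_rank_lt_card {K : Type*} [Field K] {M : Matrix m n K}
    (h : M.rank < Fintype.card m) : ∃ w ≠ 0, w ᵥ* M = 0 := by
  by_contra! hker
  refine h.not_ge (linearIndependent_row_iff_card_le_rank.1 (Matrix.vecMul_injective_iff.1 ?_))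
  exact (injective_iff_map_eq_zero M.vecMulLinear).2 fun w hwM => by_contra fun hw => hker w hw hwM

variable {R : Type*} [CommRing R] [DecidableEq p] {U : Matrix m p R} {U' : Matrix p m R}
  {V : Matrix n p R} {V' : Matrix p n R} {D : Matrix p p R}

lemma card_le_rank_mul_mul [Nontrivial R] (hU : U' * U = 1) (hV : V' * V = 1) (hD : IsUnit D) :
    Fintype.card p ≤ (U * D * V').rank :=
  calc Fintype.card p = D.rank := (Matrix.rank_of_isUnit D hD).symm
    _ = (U' * U * D * (V' * V)).rank := by rw [hU, hV, Matrix.one_mul, Matrix.mul_one]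
    _ = (U' * (U * D * V' * V)).rank := by simp only [Matrix.mul_assoc]
    _ ≤ (U * D * V' * V).rank := Matrix.rank_mul_le_right _ _
    _ ≤ (U * D * V').rank := Matrix.rank_mul_le_left _ _

lemma mul_nonsing_inv_mul_mul_self (hU : U' * U = 1) (hV : V' * V = 1) (hD : IsUnit D) :
    U * D * V' * (V * D⁻¹ * U') * (U * D * V') = U * D * V' :=
  calc U * D * V' * (V * D⁻¹ * U') * (U * D * V')
      = U * D * (V' * V) * D⁻¹ * (U' * U) * D * V' := by simp only [Matrix.mul_assoc]
    _ = U * (D * D⁻¹) * D * V' := by simp only [hU, hV, Matrix.mul_one, Matrix.mul_assoc]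
    _ = U * D * V' := by
      rw [Matrix.mul_nonsing_inv _ ((Matrix.isUnit_iff_isUnit_det D).1 hD), Matrix.mul_one]

end Rank

lemma exists_mul_eq_mul_add_vecMulVec {m n r K : Type*} [Fintype r] [Field K]
    (X : Matrix m r K) {Y : Matrix r n K} {w : r → K} (hw : w ≠ 0) (hwY : w ᵥ* Y = 0)
    (z : m → K) (v : n → K) :
    ∃ (X' : Matrix m r K) (Y' : Matrix r n K), X' * Y' = X * Y + vecMulVec z v := by
  classical
  obtain ⟨i, hi⟩ := Function.ne_iff.1 hw
  obtain ⟨u, hwu⟩ : ∃ u, w ⬝ᵥ u = 1 := ⟨Pi.single i (w i)⁻¹, by simp [mul_inv_cancel₀ hi]⟩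
  have hzero : vecMulVec (z - X *ᵥ u) (0 : n → K) = 0 := Matrix.ext fun _ _ => mul_zero _
  refine ⟨X + vecMulVec (z - X *ᵥ u) w, Y + vecMulVec u v, ?_⟩
  rw [Matrix.add_mul, Matrix.mul_add, Matrix.mul_add, mul_vecMulVec, vecMulVec_mul, hwY,
    vecMulVec_mul_vecMulVec, hwu, one_smul, hzero, zero_add, add_assoc, ← add_vecMulVec,
    add_sub_cancel]

lemma inner_eq_zero_of_forall_norm_le_norm_add_smul {𝕜 E : Type*} [RCLike 𝕜]
    [NormedAddCommGroup E] [InnerProductSpace 𝕜 E] {x y : E} (h : ∀ c : 𝕜, ‖x‖ ≤ ‖x + c • y‖) :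
    inner 𝕜 x y = 0 := by
  have hmin : ‖x - 0‖ = ⨅ w : 𝕜 ∙ y, ‖x - w‖ := by
    refine le_antisymm (le_ciInf ?_) (ciInf_le ⟨0, ?_⟩ (0 : 𝕜 ∙ y))
    · rintro ⟨w, hw⟩
      obtain ⟨c, rfl⟩ := Submodule.mem_span_singleton.1 hw
      simpa [sub_eq_add_neg] using h (-c)
    · rintro _ ⟨w, rfl⟩
      exact norm_nonneg _
  simpa using ((𝕜 ∙ y).norm_eq_iInf_iff_inner_eq_zero (zero_mem _)).1 hmin y
    (Submodule.mem_span_singleton_self y)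

section BestFactorization

open scoped ComplexOrder Matrix.Norms.Frobenius

variable {𝕜 m n r : Type*} [RCLike 𝕜] [Fintype m] [Fintype n] [Fintype r]

/-- The Frobenius inner product `⟪M, N⟫ = tr (Mᴴ * N)`, inducing the Frobenius norm. -/
@[reducible]
def frobeniusInnerProductSpace : InnerProductSpace 𝕜 (Matrix m n 𝕜) where
  inner M N := (Mᴴ * N).trace
  norm_sq_eq_re_inner M := by
    rw [Matrix.frobenius_norm_def, ← Real.sqrt_eq_rpow, Real.sq_sqrt (by positivity),
      Finset.sum_comm]
    simp [Matrix.trace, Matrix.mul_apply, RCLike.conj_mul]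
  conj_inner_symm M N := by
    rw [starRingEnd_apply, ← Matrix.trace_conjTranspose, conjTranspose_mul,
      conjTranspose_conjTranspose]
  add_left M N P := by rw [conjTranspose_add, Matrix.add_mul, Matrix.trace_add]
  smul_left M N c := by
    rw [conjTranspose_smul, Matrix.smul_mul, Matrix.trace_smul, smul_eq_mul, starRingEnd_apply]

/-- `(X, Y)` is a global minimizer of the distance from `X * Yᴴ` to `A` in the Frobenius norm, among
all pairs of factors with inner dimension `r`. -/
def IsBestFactorization (A : Matrix m n 𝕜) (X : Matrix m r 𝕜) (Y : Matrix n r 𝕜) : Prop :=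
  ∀ (X' : Matrix m r 𝕜) (Y' : Matrix n r 𝕜), ‖X * Yᴴ - A‖ ≤ ‖X' * Y'ᴴ - A‖

namespace IsBestFactorization

variable {A : Matrix m n 𝕜} {X : Matrix m r 𝕜} {Y : Matrix n r 𝕜}

lemma conjTranspose (h : IsBestFactorization A X Y) : IsBestFactorization Aᴴ Y X := by
  intro Y' X'
  rw [← Matrix.frobenius_norm_conjTranspose, ← Matrix.frobenius_norm_conjTranspose (Y' * X'ᴴ - Aᴴ)]
  simpa using h X' Y'

lemma trace_conjTranspose_residual_mul_eq_zero (h : IsBestFactorization A X Y) {B : Matrix m n 𝕜}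
    (hB : ∀ c : 𝕜, ∃ (X' : Matrix m r 𝕜) (Y' : Matrix n r 𝕜), X' * Y'ᴴ = X * Yᴴ + c • B) :
    ((X * Yᴴ - A)ᴴ * B).trace = 0 := by
  let := frobeniusInnerProductSpace (𝕜 := 𝕜) (m := m) (n := n)
  change inner 𝕜 (X * Yᴴ - A) B = 0
  refine inner_eq_zero_of_forall_norm_le_norm_add_smul (𝕜 := 𝕜) fun c => ?_
  obtain ⟨X', Y', hXY⟩ := hB c
  simpa [hXY, add_sub_right_comm] using h X' Y'

lemma mul_right_eq (h : IsBestFactorization A X Y) : A * Y = X * (Yᴴ * Y) := by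
  suffices (X * Yᴴ - A) * Y = 0 by
    rw [Matrix.sub_mul, sub_eq_zero, Matrix.mul_assoc] at this
    exact this.symm
  have horth := h.trace_conjTranspose_residual_mul_eq_zero (B := (X * Yᴴ - A) * Y * Yᴴ)
    fun c => ⟨X + c • ((X * Yᴴ - A) * Y), Y, by rw [Matrix.add_mul, Matrix.smul_mul]⟩
  rw [← Matrix.mul_assoc, Matrix.trace_mul_comm, ← Matrix.mul_assoc, ← conjTranspose_mul] at horth
  exact Matrix.trace_conjTranspose_mul_self_eq_zero_iff.1 horth

lemma conjTranspose_mul_left_eq (h : IsBestFactorization A X Y) : Xᴴ * A = Xᴴ * X * Yᴴ := by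
  simpa [Matrix.mul_assoc] using congrArg Matrix.conjTranspose h.conjTranspose.mul_right_eq

lemma mul_conjTranspose_eq_of_vecMul_eq_zero (h : IsBestFactorization A X Y) {w : r → 𝕜}
    (hw : w ≠ 0) (hwY : w ᵥ* Yᴴ = 0) : X * Yᴴ = A := by
  classical
  rw [← sub_eq_zero]
  ext i j
  have horth := h.trace_conjTranspose_residual_mul_eq_zero (B := Matrix.single i j 1) fun c => by
    obtain ⟨X', Y', hXY⟩ :=
      exists_mul_eq_mul_add_vecMulVec X hw hwY (c • Pi.single i 1) (Pi.single j 1)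
    refine ⟨X', Y'ᴴ, ?_⟩
    rw [conjTranspose_conjTranspose, hXY, smul_vecMulVec, Matrix.single_eq_single_vecMulVec_single]
  simpa only [Matrix.trace_mul_single, conjTranspose_apply, MulOpposite.op_one, one_smul,
    star_eq_zero, Matrix.zero_apply] using horth

lemma card_le_rank_conjTranspose (h : IsBestFactorization A X Y) (hr : Fintype.card r ≤ A.rank) :
    Fintype.card r ≤ Yᴴ.rank := by
  by_contra! hrank
  obtain ⟨w, hw, hwY⟩ := exists_vecMul_eq_zero_of_rank_lt_card hrank
  rw [← h.mul_conjTranspose_eq_of_vecMul_eq_zero hw hwY] at hr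
  exact (hr.trans (Matrix.rank_mul_le_right _ _)).not_gt hrank

variable [DecidableEq r]

lemma isUnit_conjTranspose_mul_self_right (h : IsBestFactorization A X Y)
    (hr : Fintype.card r ≤ A.rank) : IsUnit (Yᴴ * Y) := by
  rw [← Matrix.linearIndependent_rows_iff_isUnit]
  refine linearIndependent_row_iff_card_le_rank.2 ?_
  rw [Matrix.rank_conjTranspose_mul_self, ← Matrix.rank_conjTranspose]
  exact h.card_le_rank_conjTranspose hr

lemma isUnit_conjTranspose_mul_self_left (h : IsBestFactorization A X Y)
    (hr : Fintype.card r ≤ A.rank) : IsUnit (Xᴴ * X) :=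
  h.conjTranspose.isUnit_conjTranspose_mul_self_right (by rwa [Matrix.rank_conjTranspose])

end IsBestFactorization

theorem stmt_14_general [DecidableEq r] {A : Matrix m n 𝕜} {G : Matrix n m 𝕜} {X : Matrix m r 𝕜}
    {Y : Matrix n r 𝕜} (hG : A * G * A = A) (hr : Fintype.card r ≤ A.rank)
    (h : IsBestFactorization A X Y) : Yᴴ * G * X = 1 := by
  refine (h.isUnit_conjTranspose_mul_self_left hr).mul_left_cancel
    ((h.isUnit_conjTranspose_mul_self_right hr).mul_right_cancel ?_)
  calc Xᴴ * X * (Yᴴ * G * X) * (Yᴴ * Y)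
      = Xᴴ * X * Yᴴ * G * (X * (Yᴴ * Y)) := by simp only [Matrix.mul_assoc]
    _ = Xᴴ * (A * G * A) * Y := by
      rw [← h.conjTranspose_mul_left_eq, ← h.mul_right_eq]
      simp only [Matrix.mul_assoc]
    _ = Xᴴ * X * 1 * (Yᴴ * Y) := by
      rw [hG, h.conjTranspose_mul_left_eq, Matrix.mul_one, Matrix.mul_assoc]

lemma frobNorm_eq_norm {m n : ℕ} (M : Matrix (Fin m) (Fin n) ℝ) : frobNorm M = ‖M‖ := by
  simp [frobNorm, Matrix.frobenius_norm_def, Real.sqrt_eq_rpow]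

lemma isBestFactorization_iff_frobNorm {m n r : ℕ} {A : Matrix (Fin m) (Fin n) ℝ}
    {X : Matrix (Fin m) (Fin r) ℝ} {Y : Matrix (Fin n) (Fin r) ℝ} :
    IsBestFactorization A X Y ↔ ∀ (X' : Matrix (Fin m) (Fin r) ℝ) (Y' : Matrix (Fin n) (Fin r) ℝ),
      frobNorm (X * Yᵀ - A) ^ 2 ≤ frobNorm (X' * Y'ᵀ - A) ^ 2 := by
  simp only [IsBestFactorization, conjTranspose_eq_transpose_of_trivial, frobNorm_eq_norm,
    sq_le_sq₀ (norm_nonneg _) (norm_nonneg _)]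

end BestFactorization

/-- Every global minimizer `(X*, Y*)` of `(X, Y) ↦ ‖XYᵀ − A‖_F²` in the asymmetric
under-parametrized setting (`r < r_A`) is generalized weakly optimal:
`(Y*)ᵀ A† X* = I_r`, where `A† = VΣ⁻¹Uᵀ` is the Moore–Penrose pseudoinverse of
`A = UΣVᵀ`. -/
theorem stmt_14
    (m n rA r : ℕ) (hr : r < rA)
    (A : Matrix (Fin m) (Fin n) ℝ)
    (U : Matrix (Fin m) (Fin rA) ℝ) (V : Matrix (Fin n) (Fin rA) ℝ) (d : Fin rA → ℝ)
    (hU : Uᵀ * U = 1) (hV : Vᵀ * V = 1)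
    (hd : ∀ i, 0 < d i)
    (hdmono : ∀ i j : Fin rA, i ≤ j → d j ≤ d i)
    (hA : A = U * Matrix.diagonal d * Vᵀ)
    (Xs : Matrix (Fin m) (Fin r) ℝ) (Ys : Matrix (Fin n) (Fin r) ℝ)
    (hmin : ∀ (X : Matrix (Fin m) (Fin r) ℝ) (Y : Matrix (Fin n) (Fin r) ℝ),
      frobNorm (Xs * Ysᵀ - A) ^ 2 ≤ frobNorm (X * Yᵀ - A) ^ 2) :
    Ysᵀ * (V * (Matrix.diagonal d)⁻¹ * Uᵀ) * Xs = 1 := by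
  have hD : IsUnit (Matrix.diagonal d) :=
    Matrix.isUnit_diagonal.2 (Pi.isUnit_iff.2 fun i => (hd i).ne'.isUnit)
  have hrank : Fintype.card (Fin r) ≤ A.rank := by
    rw [hA]
    exact le_trans (by simpa using hr.le) (card_le_rank_mul_mul hU hV hD)
  have hG : A * (V * (Matrix.diagonal d)⁻¹ * Uᵀ) * A = A := by
    rw [hA]
    exact mul_nonsing_inv_mul_mul_self hU hV hD
  simpa only [conjTranspose_eq_transpose_of_trivial] using
    stmt_14_general hG hrank (isBestFactorization_iff_frobNorm.2 hmin)
end
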